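/- On the lexicographic domain ℒ, a rule satisfies balancedness (BAL), individual-good efficiency (IGE), the worst-endowment lower bound (WELB), and drop strategy-proofness (DSP) if and only if it equals the generalized Top Trading Cycles rule TTC. -/

import Mathlib

attribute [local instance] Classical.propDecidable

namespace Realloc

/-- A strict preference over bundles: a strict total order on `Finset O`. -/
structure Pref (O : Type) : Type where
  strict : Finset O → Finset O → Prop
  total : ∀ X Y : Finset O, strict X Y ∨ X = Y ∨ strict Y X
  irrefl : ∀ X : Finset O, ¬ strict X X
  trans : ∀ X Y Z : Finset O, strict X Y → strict Y Z → strict X Z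

/-- The weak ("at least as good as") relation associated with a strict preference. -/
def Pref.weak {O : Type} (p : Pref O) (X Y : Finset O) : Prop :=
  p.strict X Y ∨ X = Y

/-- An allocation: nonempty pairwise disjoint bundles whose union is all of `O`. -/
structure Allocation (N O : Type) : Type where
  bundle : N → Finset O
  nonempty : ∀ i : N, (bundle i).Nonempty
  disj : ∀ i j : N, i ≠ j → ∀ o : O, o ∈ bundle i → o ∉ bundle j
  cover : ∀ o : O, ∃ i : N, o ∈ bundle i

variable {N O : Type}

/-- Two preferences induce the same marginal (singleton) ranking over objects. -/
def MargEq (p q : Pref O) : Prop :=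
  ∀ x y : O, p.strict {x} {y} ↔ q.strict {x} {y}

/-- Responsive preferences. -/
def Responsive [DecidableEq O] (p : Pref O) : Prop :=
  ∀ (X : Finset O) (y z : O), y ∉ X → z ∉ X →
    (p.strict (insert y X) (insert z X) ↔ p.strict {y} {z})

/-- Lexicographic preferences: `X` is preferred to `Y` iff the best object of the
symmetric difference belongs to `X`. -/
def Lexicographic [DecidableEq O] (p : Pref O) : Prop :=
  ∀ X Y : Finset O, X ≠ Y →
    (p.strict X Y ↔
      ∃ x ∈ X \ Y, ∀ y ∈ (X \ Y) ∪ (Y \ X), y ≠ x → p.strict {x} {y})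

/-- Conditionally lexicographic preferences. -/
def CondLex [DecidableEq O] (p : Pref O) : Prop :=
  ∀ X Y : Finset O, Disjoint X Y → X.Nonempty →
    ∃! x : O, x ∈ X ∧ ∀ Z : Finset O, Z ⊆ X.erase x → p.strict (insert x Y) (Y ∪ Z)

/-- Monotonic preferences. -/
def Monot (p : Pref O) : Prop :=
  ∀ X Y : Finset O, Y ⊆ X → p.weak X Y

/-- `p'` is a subset-drop strategy for `p` (relative to endowment `ωi`):
some set `X ⊆ O ∖ ωi` is moved to the bottom of the marginal ranking, preserving
the relative marginal order within `X` and within its complement. -/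
def SubsetDropStrategy (ωi : Finset O) (p p' : Pref O) : Prop :=
  ∃ X : Set O, (∀ x ∈ X, x ∉ ωi) ∧
    (∀ x ∈ X, ∀ y ∈ X, (p.strict {x} {y} ↔ p'.strict {x} {y})) ∧
    (∀ x ∉ X, ∀ y ∉ X, (p.strict {x} {y} ↔ p'.strict {x} {y})) ∧
    (∀ x ∈ X, ∀ y ∉ X, p'.strict {y} {x})

/-- `p'` is a drop strategy for `p`: a single object `x ∉ ωi` is moved to the bottom. -/
def DropStrategy (ωi : Finset O) (p p' : Pref O) : Prop :=
  ∃ x : O, x ∉ ωi ∧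
    (∀ u v : O, u ≠ x → v ≠ x → (p.strict {u} {v} ↔ p'.strict {u} {v})) ∧
    (∀ y : O, y ≠ x → p'.strict {y} {x})

/-- `p'` is a truncation strategy for `p`: the tail set
`{o ∈ O ∖ ωi : {x} R {o}}` (for some object `x`) is moved to the bottom. -/
def TruncationStrategy (ωi : Finset O) (p p' : Pref O) : Prop :=
  ∃ x : O,
    (∀ u v : O, (u ∉ ωi ∧ p.weak {x} {u}) → (v ∉ ωi ∧ p.weak {x} {v}) →
      (p.strict {u} {v} ↔ p'.strict {u} {v})) ∧
    (∀ u v : O, ¬(u ∉ ωi ∧ p.weak {x} {u}) → ¬(v ∉ ωi ∧ p.weak {x} {v}) →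
      (p.strict {u} {v} ↔ p'.strict {u} {v})) ∧
    (∀ u v : O, (u ∉ ωi ∧ p.weak {x} {u}) → ¬(v ∉ ωi ∧ p.weak {x} {v}) →
      p'.strict {v} {u})

/-- There is a Pareto-improving trading cycle at the assignment `μ`:
a cyclic sequence of `k+1 ≥ 1` distinct objects and distinct agents, each object owned
(at `μ`) by its agent, such that every agent on the cycle strictly gains by swapping
the object she relinquishes for the object she points to. -/
def ParetoImprovingCycleAt [DecidableEq O] (pref : N → Pref O) (μ : N → Finset O) : Prop :=
  ∃ (k : ℕ) (obj : Fin (k + 1) → O) (ag : Fin (k + 1) → N),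
    Function.Injective obj ∧ Function.Injective ag ∧
    (∀ ℓ : Fin (k + 1), obj ℓ ∈ μ (ag ℓ)) ∧
    (∀ ℓ : Fin (k + 1),
      (pref (ag ℓ)).strict ((insert (obj (ℓ + 1)) (μ (ag ℓ))).erase (obj ℓ)) (μ (ag ℓ)))

/-- Individual-good efficiency of an assignment at a profile. -/
def IGEat [DecidableEq O] (pref : N → Pref O) (μ : N → Finset O) : Prop :=
  ¬ ParetoImprovingCycleAt pref μ

/-- `ν` Pareto dominates `μ` at the profile `pref`. -/
def ParetoDominates (pref : N → Pref O) (ν μ : N → Finset O) : Prop :=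
  (∀ i, (pref i).weak (ν i) (μ i)) ∧ ∃ j, (pref j).strict (ν j) (μ j)

/-- Pareto efficiency of an assignment at a profile. -/
def ParetoEffAt (pref : N → Pref O) (μ : N → Finset O) : Prop :=
  ∀ ν : Allocation N O, ¬ ParetoDominates pref ν.bundle μ

/-- The marginally most-preferred object of a (nonempty) finite set of objects. -/
noncomputable def Pref.best [Nonempty O] (p : Pref O) (S : Finset O) : O :=
  if h : ∃ x : O, x ∈ S ∧ ∀ y ∈ S, p.weak {x} {y} then h.choose
  else Classical.arbitrary O

/-- The conditionally most-preferred object of `S` given the already-held bundle `Y`. -/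
noncomputable def Pref.cbest [Nonempty O] [DecidableEq O] (p : Pref O) (S Y : Finset O) : O :=
  if h : ∃ x : O, x ∈ S ∧ ∀ Z : Finset O, Z ⊆ S.erase x → p.strict (insert x Y) (Y ∪ Z)
  then h.choose else Classical.arbitrary O

/-- The initial owner of an object. -/
noncomputable def Allocation.owner (ω : Allocation N O) (o : O) : N :=
  (ω.cover o).choose

/-- One pass of the generalized TTC algorithm, with fuel.  At each step every agent points
to her marginally best remaining object and every remaining object points to its owner;
the objects lying on cycles of this functional graph (the periodic points of `g`) are
traded: the owner of a cycling object receives the object she points to. -/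
noncomputable def TTCaux [Nonempty O] [DecidableEq O] (pref : N → Pref O) (own : O → N) :
    ℕ → Finset O → N → Finset O
  | 0, _, _ => ∅
  | fuel + 1, S, i =>
      let g : O → O := fun o => (pref (own o)).best S
      let C : Finset O := S.filter fun o => ∃ k : ℕ, 0 < k ∧ g^[k] o = o
      if S.Nonempty then
        ((C.filter fun o => own o = i).image g) ∪ TTCaux pref own fuel (S \ C) i
      else ∅

/-- The generalized Top Trading Cycles rule: the bundle received by agent `i`. -/
noncomputable def TTC [Fintype O] [Nonempty O] [DecidableEq O]
    (pref : N → Pref O) (ω : Allocation N O) (i : N) : Finset O :=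
  TTCaux pref ω.owner (Fintype.card O + 1) Finset.univ i

/-- One pass of the Augmented TTC algorithm, with fuel: agents point to their
conditionally most-preferred remaining object given the bundle assigned so far. -/
noncomputable def ATTCaux [Nonempty O] [DecidableEq O] (pref : N → Pref O) (own : O → N) :
    ℕ → Finset O → (N → Finset O) → N → Finset O
  | 0, _, μ => μ
  | fuel + 1, S, μ =>
      let g : O → O := fun o => (pref (own o)).cbest S (μ (own o))
      let C : Finset O := S.filter fun o => ∃ k : ℕ, 0 < k ∧ g^[k] o = o
      if S.Nonempty then
        ATTCaux pref own fuel (S \ C) (fun j => μ j ∪ ((C.filter fun o => own o = j).image g))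
      else μ

/-- The Augmented Top Trading Cycles rule: the bundle received by agent `i`. -/
noncomputable def ATTC [Fintype O] [Nonempty O] [DecidableEq O]
    (pref : N → Pref O) (ω : Allocation N O) (i : N) : Finset O :=
  ATTCaux pref ω.owner (Fintype.card O + 1) Finset.univ (fun _ => ∅) i

/-- Conditional marginal preference of `p` given the bundle `Y`:
`x` is conditionally better than `y`. -/
def CMarg [DecidableEq O] (p : Pref O) (Y : Finset O) (x y : O) : Prop :=
  p.strict ((insert x Y).erase y) ((insert y Y).erase x)

/-- Weak conditional marginal preference. -/
def CMargWeak [DecidableEq O] (p : Pref O) (Y : Finset O) (x y : O) : Prop :=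
  CMarg p Y x y ∨ x = y

/-- Drop strategy on the conditionally lexicographic domain: `x ∉ ωi` becomes the worst,
with preferences over bundles avoiding `x` unchanged. -/
def DropStrategyCL (ωi : Finset O) (p p' : Pref O) : Prop :=
  ∃ x : O, x ∉ ωi ∧
    (∀ Y : Finset O, Y.Nonempty → x ∉ Y → p'.strict Y {x}) ∧
    (∀ Y Z : Finset O, x ∉ Y → x ∉ Z → (p'.strict Y Z ↔ p.strict Y Z))

section Rules

variable [DecidableEq O]

/-- Balancedness of a rule on the domain `D`. -/
def RBAL (D : Pref O → Prop) (ω : Allocation N O)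
    (φ : (N → Pref O) → Allocation N O) : Prop :=
  ∀ P : N → Pref O, (∀ i, D (P i)) → ∀ i, ((φ P).bundle i).card = (ω.bundle i).card

/-- Individual-good efficiency of a rule on the domain `D`. -/
def RIGE (D : Pref O → Prop) (φ : (N → Pref O) → Allocation N O) : Prop :=
  ∀ P : N → Pref O, (∀ i, D (P i)) → IGEat P ((φ P).bundle)

/-- Pareto efficiency of a rule on the domain `D`. -/
def RPE (D : Pref O → Prop) (φ : (N → Pref O) → Allocation N O) : Prop :=
  ∀ P : N → Pref O, (∀ i, D (P i)) → ParetoEffAt P ((φ P).bundle)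

/-- Individual rationality of a rule on the domain `D`. -/
def RIR (D : Pref O → Prop) (ω : Allocation N O)
    (φ : (N → Pref O) → Allocation N O) : Prop :=
  ∀ P : N → Pref O, (∀ i, D (P i)) → ∀ i, (P i).weak ((φ P).bundle i) (ω.bundle i)

/-- The worst-endowment lower bound of a rule on the domain `D`: no agent receives an
object marginally worse than the marginally worst object of her endowment. -/
def RWELB (D : Pref O → Prop) (ω : Allocation N O)
    (φ : (N → Pref O) → Allocation N O) : Prop :=
  ∀ P : N → Pref O, (∀ i, D (P i)) → ∀ i, ∀ o ∈ (φ P).bundle i,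
    ∀ w ∈ ω.bundle i, (∀ y ∈ ω.bundle i, (P i).weak {y} {w}) → (P i).weak {o} {w}

/-- Marginality of a rule on the domain `D`. -/
def RMAR (D : Pref O → Prop) (φ : (N → Pref O) → Allocation N O) : Prop :=
  ∀ P P' : N → Pref O, (∀ i, D (P i)) → (∀ i, D (P' i)) →
    (∀ i, MargEq (P i) (P' i)) → ∀ i, (φ P).bundle i = (φ P').bundle i

variable [DecidableEq N]

/-- Truncation-proofness of a rule on the domain `D`. -/
def RTP (D : Pref O → Prop) (ω : Allocation N O)
    (φ : (N → Pref O) → Allocation N O) : Prop :=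
  ∀ P : N → Pref O, (∀ i, D (P i)) → ∀ i : N, ∀ p' : Pref O, D p' →
    TruncationStrategy (ω.bundle i) (P i) p' →
    (P i).weak ((φ P).bundle i) ((φ (Function.update P i p')).bundle i)

/-- Drop strategy-proofness of a rule on the domain `D`. -/
def RDSP (D : Pref O → Prop) (ω : Allocation N O)
    (φ : (N → Pref O) → Allocation N O) : Prop :=
  ∀ P : N → Pref O, (∀ i, D (P i)) → ∀ i : N, ∀ p' : Pref O, D p' →
    DropStrategy (ω.bundle i) (P i) p' →
    (P i).weak ((φ P).bundle i) ((φ (Function.update P i p')).bundle i)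

/-- Subset-drop strategy-proofness of a rule on the domain `D`. -/
def RSDSP (D : Pref O → Prop) (ω : Allocation N O)
    (φ : (N → Pref O) → Allocation N O) : Prop :=
  ∀ P : N → Pref O, (∀ i, D (P i)) → ∀ i : N, ∀ p' : Pref O, D p' →
    SubsetDropStrategy (ω.bundle i) (P i) p' →
    (P i).weak ((φ P).bundle i) ((φ (Function.update P i p')).bundle i)

/-- Worst-endowment lower bound on the conditionally lexicographic domain, formulated
with conditional marginal preferences. -/
def RWELBCL (D : Pref O → Prop) (ω : Allocation N O)
    (φ : (N → Pref O) → Allocation N O) : Prop :=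
  ∀ P : N → Pref O, (∀ i, D (P i)) → ∀ i, ∀ o ∈ (φ P).bundle i,
    ∀ w ∈ ω.bundle i,
      (∀ y ∈ ω.bundle i, CMargWeak (P i) ((φ P).bundle i) y w) →
      CMargWeak (P i) ((φ P).bundle i) o w

/-- Drop strategy-proofness on the conditionally lexicographic domain. -/
def RDSPCL (D : Pref O → Prop) (ω : Allocation N O)
    (φ : (N → Pref O) → Allocation N O) : Prop :=
  ∀ P : N → Pref O, (∀ i, D (P i)) → ∀ i : N, ∀ p' : Pref O, D p' →
    DropStrategyCL (ω.bundle i) (P i) p' →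
    (P i).weak ((φ P).bundle i) ((φ (Function.update P i p')).bundle i)

end Rules

/-- Agent `i`'s opportunity set under TTC when reporting `p`: the set of bundles
she may receive as others' (responsive) reports vary. -/
def Opp [Fintype O] [Nonempty O] [DecidableEq O] (ω : Allocation N O) (i : N)
    (p : Pref O) : Set (Finset O) :=
  {A | ∃ Q : N → Pref O, (∀ j, Responsive (Q j)) ∧ Q i = p ∧ TTC Q ω i = A}


theorem weak_single {p : Pref O} {x y : O} : p.weak {x} {y} ↔ (p.strict {x} {y} ∨ x = y) := by
  unfold Pref.weak; simp

theorem not_weak {p : Pref O} {X Y : Finset O} : ¬ p.weak X Y ↔ p.strict Y X := by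
  unfold Pref.weak
  constructor
  · intro h
    rcases p.total X Y with h1 | h1 | h1
    · exact absurd (Or.inl h1) h
    · exact absurd (Or.inr h1) h
    · exact h1
  · rintro h (h1 | h1)
    · exact p.irrefl _ (p.trans _ _ _ h h1)
    · subst h1; exact p.irrefl _ h

theorem strict_asymm {p : Pref O} {X Y : Finset O} (h : p.strict X Y) : ¬ p.strict Y X :=
  fun h1 => p.irrefl _ (p.trans _ _ _ h h1)

theorem weak_antisymm {p : Pref O} {x y : O} (h : p.weak {x} {y}) (h' : p.weak {y} {x}) :
    x = y := by
  rw [weak_single] at h h'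
  rcases h with h | h
  · rcases h' with h' | h'
    · exact absurd h' (strict_asymm h)
    · exact h'.symm
  · exact h

theorem exists_best (p : Pref O) (S : Finset O) (hS : S.Nonempty) :
    ∃ x ∈ S, ∀ y ∈ S, p.weak {x} {y} := by
  induction hS using Finset.Nonempty.cons_induction with
  | singleton a => exact ⟨a, by simp, by intro y hy; simp at hy; subst hy; exact Or.inr rfl⟩
  | cons a s ha hs ih =>
    obtain ⟨x, hx, hxy⟩ := ih
    rcases p.total {x} {a} with h | h | h
    · refine ⟨x, by simp [hx], ?_⟩
      intro y hy
      rcases Finset.mem_cons.1 hy with rfl | hy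
      · exact Or.inl h
      · exact hxy y hy
    · have : x = a := by simpa using h
      exact absurd (this ▸ hx) ha
    · refine ⟨a, by simp, ?_⟩
      intro y hy
      rcases Finset.mem_cons.1 hy with rfl | hy
      · exact Or.inr rfl
      · rcases hxy y hy with h1 | h1
        · exact Or.inl (p.trans _ _ _ h h1)
        · rw [← h1]; exact Or.inl h

theorem exists_worst (p : Pref O) (S : Finset O) (hS : S.Nonempty) :
    ∃ x ∈ S, ∀ y ∈ S, p.weak {y} {x} := by
  let q : Pref O := ⟨fun X Y => p.strict Y X, fun X Y => by
    rcases p.total X Y with h | h | h <;> simp [h], fun X => p.irrefl X,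
    fun X Y Z h1 h2 => p.trans _ _ _ h2 h1⟩
  obtain ⟨x, hx, h⟩ := exists_best q S hS
  refine ⟨x, hx, fun y hy => ?_⟩
  rcases h y hy with h1 | h1
  · exact Or.inl h1
  · exact Or.inr h1.symm

theorem best_spec [Nonempty O] (p : Pref O) (S : Finset O) (hS : S.Nonempty) :
    p.best S ∈ S ∧ ∀ y ∈ S, p.weak {p.best S} {y} := by
  have h := exists_best p S hS
  unfold Pref.best
  rw [dif_pos h]
  exact h.choose_spec

/-- Rank-induced lexicographic preference. -/
theorem exists_lex [DecidableEq O] (f : O → ℕ) (hf : Function.Injective f) :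
    ∃ p : Pref O, Lexicographic p ∧ ∀ x y, p.strict {x} {y} ↔ f y < f x := by
  let p : Pref O := ⟨fun X Y => toColex (Y.image f) < toColex (X.image f), fun X Y => by
      rcases lt_trichotomy (toColex (X.image f)) (toColex (Y.image f)) with h | h | h
      · exact Or.inr (Or.inr h)
      · exact Or.inr (Or.inl (Finset.image_injective hf (toColex.injective h)))
      · exact Or.inl h, fun X => lt_irrefl _, fun X Y Z h1 h2 => lt_trans h2 h1⟩
  have hs : ∀ x y, p.strict {x} {y} ↔ f y < f x := by
    intro x y
    change toColex (({y} : Finset O).image f) < toColex (({x} : Finset O).image f) ↔ _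
    simp [Finset.Colex.singleton_lt_singleton]
  refine ⟨p, ?_, hs⟩
  intro X Y hXY
  have hne : Y.image f ≠ X.image f := fun h => hXY (Finset.image_injective hf h).symm
  change toColex (Y.image f) < toColex (X.image f) ↔ _
  simp only [hs]
  rw [Finset.Colex.toColex_lt_toColex_iff_max'_mem]
  constructor
  · rintro ⟨h, hm⟩
    have hmm := Finset.max'_mem _ (Finset.symmDiff_nonempty.2 h)
    have hle : ∀ z ∈ symmDiff (Y.image f) (X.image f), z ≤ (symmDiff (Y.image f) (X.image f)).max'
        (Finset.symmDiff_nonempty.2 h) := fun z hz => Finset.le_max' _ z hz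
    generalize (symmDiff (Y.image f) (X.image f)).max' _ = m at *
    obtain ⟨x, hx, rfl⟩ := Finset.mem_image.1 hm
    have hxY : x ∉ Y := by
      intro hxY
      simp only [Finset.mem_symmDiff] at hmm
      have := Finset.mem_image_of_mem f hxY
      tauto
    refine ⟨x, by simp [hx, hxY], ?_⟩
    intro y hy hyx
    have : f y ≤ f x := by
      apply hle
      simp only [Finset.mem_symmDiff, hf.mem_finset_image]
      simp at hy; tauto
    exact lt_of_le_of_ne this (fun h => hyx (hf h))
  · rintro ⟨x, hx, h⟩
    refine ⟨hne, ?_⟩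
    have hmm := Finset.max'_mem _ (Finset.symmDiff_nonempty.2 hne)
    have hle : ∀ z ∈ symmDiff (Y.image f) (X.image f), z ≤ (symmDiff (Y.image f) (X.image f)).max'
        (Finset.symmDiff_nonempty.2 hne) := fun z hz => Finset.le_max' _ z hz
    generalize (symmDiff (Y.image f) (X.image f)).max' _ = m at *
    simp at hx
    have hxm : f x ≤ m := by
      apply hle
      simp only [Finset.mem_symmDiff, hf.mem_finset_image]
      tauto
    have : ∃ z, f z = m ∧ z ∈ (X \ Y) ∪ (Y \ X) := by
      simp only [Finset.mem_symmDiff, Finset.mem_image] at hmm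
      rcases hmm with ⟨⟨z, hz, rfl⟩, h2⟩ | ⟨⟨z, hz, rfl⟩, h2⟩
      · exact ⟨z, rfl, by simp; right; exact ⟨hz, fun h => h2 ⟨z, h, rfl⟩⟩⟩
      · exact ⟨z, rfl, by simp; left; exact ⟨hz, fun h => h2 ⟨z, h, rfl⟩⟩⟩
    obtain ⟨z, rfl, hz⟩ := this
    by_cases hzx : z = x
    · subst hzx; exact Finset.mem_image_of_mem f hx.1
    · have := h z hz hzx
      omega

theorem exists_drop [Fintype O] [DecidableEq O] (p : Pref O) (x : O) :
    ∃ p' : Pref O, Lexicographic p' ∧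
      (∀ u v : O, u ≠ x → v ≠ x → (p.strict {u} {v} ↔ p'.strict {u} {v})) ∧
      (∀ y : O, y ≠ x → p'.strict {y} {x}) := by
  classical
  let r : O → ℕ := fun a => (Finset.univ.filter fun b => p.strict {a} {b}).card
  have hr : ∀ a b, p.strict {a} {b} → r b < r a := by
    intro a b h
    apply Finset.card_lt_card
    rw [Finset.ssubset_iff_of_subset]
    · exact ⟨b, by simp [h], by simp [p.irrefl]⟩
    · intro c hc
      simp only [Finset.mem_filter, Finset.mem_univ, true_and] at hc ⊢
      exact p.trans _ _ _ h hc
  have hr' : ∀ a b, p.strict {a} {b} ↔ r b < r a := by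
    intro a b
    refine ⟨hr a b, fun h => ?_⟩
    rcases p.total {a} {b} with h1 | h1 | h1
    · exact h1
    · have : a = b := by simpa using h1
      subst this; omega
    · have := hr _ _ h1; omega
  have hinj : ∀ a b, r a = r b → a = b := by
    intro a b h
    rcases p.total {a} {b} with h1 | h1 | h1
    · have := hr _ _ h1; omega
    · simpa using h1
    · have := hr _ _ h1; omega
  let f : O → ℕ := fun a => if a = x then 0 else r a + 1
  obtain ⟨p', hp', hs⟩ := exists_lex f (by
    intro a b h
    simp only [f] at h
    split_ifs at h with h1 h2 h2
    · rw [h1, h2]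
    · exact hinj _ _ (by omega))
  refine ⟨p', hp', ?_, ?_⟩
  · intro u v hu hv
    rw [hs, hr']; simp [f, hu, hv]
  · intro y hy
    rw [hs]; simp [f, hy]

theorem lex_swap [DecidableEq O] {p : Pref O} (hp : Lexicographic p) {F : Finset O} {b o : O}
    (ho : o ∈ F) :
    p.strict ((insert b F).erase o) F ↔ b ∉ F ∧ p.strict {b} {o} := by
  have hne : (insert b F).erase o ≠ F := by
    intro h; rw [← h] at ho; simp at ho
  rw [hp _ _ hne]
  constructor
  · rintro ⟨x, hx, h⟩
    simp only [Finset.mem_sdiff, Finset.mem_erase, Finset.mem_insert] at hx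
    have hxb : x = b := by tauto
    subst hxb
    refine ⟨hx.2, h o ?_ (fun h => hx.1.1 h.symm)⟩
    simp [ho]
  · rintro ⟨hb, h⟩
    have hbo : b ≠ o := fun h => hb (h ▸ ho)
    refine ⟨b, by simp [hb, hbo], ?_⟩
    intro y hy hyb
    have : y = o := by
      simp only [Finset.mem_union, Finset.mem_sdiff, Finset.mem_erase, Finset.mem_insert] at hy
      tauto
    rw [this]; exact h

theorem perm_closed [Finite O] (σ : Equiv.Perm O) (Q : O → Prop) (h : ∀ y, Q y → Q (σ y)) :
    ∀ y, Q (σ y) → Q y := by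
  intro y hy
  have hfin : IsOfFinOrder σ := isOfFinOrder_of_finite σ
  have key : ∀ n : ℕ, Q ((σ ^ n) (σ y)) := by
    intro n
    induction n with
    | zero => simpa using hy
    | succ n ih => rw [pow_succ', Equiv.Perm.mul_apply]; exact h _ ih
  obtain ⟨n, hn, h1⟩ := hfin.exists_pow_eq_one
  have := key (n - 1)
  rw [← Equiv.Perm.mul_apply, ← pow_succ, Nat.sub_add_cancel hn, h1] at this
  simpa using this

/-- Partial certificate up to horizon `t`. -/
def PC (P : N → Pref O) (own : O → N) (σ : Equiv.Perm O) (τ : O → ℕ) (t : ℕ) : Prop :=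
  ∀ o, τ o < t → τ (σ o) = τ o ∧ ∀ y, τ o ≤ τ y → (P (own o)).weak {σ o} {y}

theorem PC.symm [Finite O] {P : N → Pref O} {own : O → N} {σ : Equiv.Perm O} {τ : O → ℕ} {t : ℕ}
    (h : PC P own σ τ t) (z : O) (hz : τ z < t) : ∃ y, σ y = z ∧ τ y = τ z := by
  refine ⟨σ.symm z, by simp, ?_⟩
  apply perm_closed σ (fun y => τ y = τ z)
  · intro y hy
    rw [(h y (by omega)).1, hy]
  · simp

theorem PC.mono {P : N → Pref O} {own : O → N} {σ : Equiv.Perm O} {τ : O → ℕ} {t s : ℕ}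
    (h : PC P own σ τ t) (hs : s ≤ t) : PC P own σ τ s :=
  fun o ho => h o (by omega)

/-- Uniqueness of the outcome of certificates. -/
theorem PC.unique [Fintype O] {P : N → Pref O} {own : O → N} {σ σ' : Equiv.Perm O}
    {τ τ' : O → ℕ} {t : ℕ} (h : PC P own σ τ t) (h' : ∀ t', PC P own σ' τ' t') :
    ∀ o, τ o < t → σ' o = σ o := by
  suffices H : ∀ s, ∀ m, ∀ o, τ o = s → τ' o = m → s < t → σ' o = σ o from
    fun o ho => H _ _ o rfl rfl ho
  intro s
  induction s using Nat.strong_induction_on with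
  | _ s ihs =>
  intro m
  induction m using Nat.strong_induction_on with
  | _ m ihm =>
  intro o hos hom hst
  have hτ := h o (by omega)
  have hτ' := h' (m + 1) o (by omega)
  have hb : m ≤ τ' (σ o) := by
    by_contra hlt
    have := perm_closed σ (fun y => τ y = s ∧ τ' y < m) (by
      rintro y ⟨h1, h2⟩
      have e := ihm _ h2 y h1 rfl hst
      refine ⟨by rw [(h y (by omega)).1, h1], ?_⟩
      rw [← e, (h' (m+1) y (by omega)).1]; exact h2) o ⟨by omega, by omega⟩
    omega
  by_contra hne
  have hw := hτ'.2 (σ o) (by omega)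
  have hz : τ (σ' o) < s := by
    by_contra hlt
    exact hne (weak_antisymm hw (hτ.2 _ (by omega)))
  obtain ⟨y, hy, hyt⟩ := h.symm (σ' o) (by omega)
  have := ihs (τ y) (by omega) _ y rfl rfl (by omega)
  have : y = o := σ'.injective (by rw [this, hy])
  subst this; omega

theorem exists_cycle [Fintype O] (σ : Equiv.Perm O) (o : O) :
    ∃ (k : ℕ) (obj : Fin (k + 1) → O), Function.Injective obj ∧ (∀ ℓ, ∃ n : ℕ, obj ℓ = (σ^[n]) o) ∧
      ∀ ℓ, obj (ℓ + 1) = σ (obj ℓ) := by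
  have hper : 0 < Function.minimalPeriod σ o := by
    apply Function.minimalPeriod_pos_of_mem_periodicPts
    exact Function.Injective.mem_periodicPts σ.injective o
  obtain ⟨k, hk⟩ : ∃ k, Function.minimalPeriod σ o = k + 1 := ⟨_, (Nat.sub_add_cancel hper).symm⟩
  refine ⟨k, fun ℓ => (σ^[ℓ.1]) o, ?_, fun ℓ => ⟨_, rfl⟩, ?_⟩
  · intro a b hab
    apply Fin.ext
    exact Function.iterate_injOn_Iio_minimalPeriod (f := σ) (x := o)
      (by simp [hk]; omega) (by simp [hk]; omega) hab
  · intro ℓ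
    simp only
    rw [← Function.iterate_succ_apply' σ, Fin.val_add_one]
    split_ifs with h
    · subst h
      simp only [Fin.val_last, Function.iterate_zero, id]
      rw [Nat.succ_eq_add_one, ← hk, Function.iterate_minimalPeriod]
    · rfl

theorem ttc_cert [Fintype O] [Nonempty O] [DecidableEq O] (P : N → Pref O) (own : O → N) :
    ∀ (fuel : ℕ) (S : Finset O), S.card ≤ fuel → ∃ (σ : Equiv.Perm O) (τ : O → ℕ),
      (∀ o, o ∉ S → σ o = o) ∧
      (∀ o ∈ S, τ (σ o) = τ o ∧ ∀ y ∈ S, τ o ≤ τ y → (P (own o)).weak {σ o} {y}) ∧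
      ∀ i z, z ∈ TTCaux P own fuel S i ↔ ∃ o ∈ S, own o = i ∧ σ o = z := by
  intro fuel
  induction fuel with
  | zero =>
    intro S hS
    have : S = ∅ := by simpa using hS
    subst this
    exact ⟨1, fun _ => 0, by simp, by simp, by simp [TTCaux]⟩
  | succ fuel ih =>
    intro S hS
    by_cases hne : S.Nonempty
    swap
    · have : S = ∅ := by simpa using hne
      subst this
      exact ⟨1, fun _ => 0, by simp, by simp, by simp [TTCaux]⟩
    obtain ⟨g, hg⟩ : ∃ g : O → O, g = fun o => (P (own o)).best S := ⟨_, rfl⟩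
    have hgS : ∀ o, g o ∈ S := by
      intro o; rw [hg]; exact (best_spec _ S hne).1
    have hgb : ∀ o, ∀ y ∈ S, (P (own o)).weak {g o} {y} := by
      intro o; rw [hg]; exact (best_spec _ S hne).2
    obtain ⟨C, hC⟩ : ∃ C : Finset O, C = S.filter fun o => ∃ k : ℕ, 0 < k ∧ g^[k] o = o := ⟨_, rfl⟩
    have hmC : ∀ o, o ∈ C ↔ ∃ k : ℕ, 0 < k ∧ g^[k] o = o := by
      intro o
      rw [hC]
      simp only [Finset.mem_filter, and_iff_right_iff_imp]
      rintro ⟨k, hk, h⟩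
      rw [← h, ← Nat.sub_add_cancel hk, Function.iterate_succ_apply']
      exact hgS _
    have hCS : C ⊆ S := by rw [hC]; exact Finset.filter_subset _ _
    have hgC : ∀ o ∈ C, g o ∈ C := by
      intro o ho
      rw [hmC] at ho ⊢
      obtain ⟨k, hk, h⟩ := ho
      exact ⟨k, hk, by rw [← Function.iterate_succ_apply, Function.iterate_succ_apply', h]⟩
    have hginj : ∀ a ∈ C, ∀ b ∈ C, g a = g b → a = b := by
      intro a ha b hb hab
      obtain ⟨k, hk, hka⟩ := (hmC a).1 ha
      obtain ⟨l, hl, hlb⟩ := (hmC b).1 hb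
      have h1 : g^[l * k] a = a := by
        rw [mul_comm]; exact Function.IsPeriodicPt.mul_const (show Function.IsPeriodicPt g k a from hka) l
      have h2 : g^[l * k] b = b := Function.IsPeriodicPt.mul_const (show Function.IsPeriodicPt g l b from hlb) k
      have hpos : 0 < l * k := Nat.mul_pos hl hk
      rw [← h1, ← h2, ← Nat.sub_add_cancel hpos, Function.iterate_succ_apply,
        Function.iterate_succ_apply, hab]
    have hCne : C.Nonempty := by
      obtain ⟨o, ho⟩ := hne
      obtain ⟨m, n, hmn, h⟩ := Finite.exists_ne_map_eq_of_infinite (fun n : ℕ => g^[n] o)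
      have key : ∀ m n : ℕ, m < n → g^[m] o = g^[n] o → C.Nonempty := by
        intro m n hmn h
        refine ⟨g^[m] o, (hmC _).2 ⟨n - m, by omega, ?_⟩⟩
        rw [← Function.iterate_add_apply, Nat.sub_add_cancel hmn.le, h]
      rcases lt_or_gt_of_ne hmn with h1 | h1
      · exact key m n h1 h
      · exact key n m h1 h.symm
    have hcard : (S \ C).card ≤ fuel := by
      have h1 := Finset.card_sdiff_add_card_eq_card hCS
      have h2 := hCne.card_pos
      omega
    obtain ⟨σ₁, τ₁, hfix, hcert, hT⟩ := ih (S \ C) hcard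
    have hσC : ∀ o, o ∉ C → σ₁ o ∉ C := by
      intro o ho hc
      have h1 : σ₁ (σ₁ o) = σ₁ o := hfix _ (by simp [hc])
      have h2 := σ₁.injective h1
      rw [h2] at hc; exact ho hc
    let f : O → O := fun o => if o ∈ C then g o else σ₁ o
    have hf1 : ∀ o ∈ C, f o = g o := fun o ho => by simp [f, ho]
    have hf2 : ∀ o, o ∉ C → f o = σ₁ o := fun o ho => by simp [f, ho]
    have hfinj : Function.Injective f := by
      intro a b hab
      by_cases ha : a ∈ C <;> by_cases hb : b ∈ C
      · rw [hf1 a ha, hf1 b hb] at hab; exact hginj a ha b hb hab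
      · rw [hf1 a ha, hf2 b hb] at hab; exact absurd (hab ▸ hgC a ha) (hσC b hb)
      · rw [hf2 a ha, hf1 b hb] at hab; exact absurd (hab ▸ hgC b hb) (hσC a ha)
      · rw [hf2 a ha, hf2 b hb] at hab; exact σ₁.injective hab
    refine ⟨Equiv.ofBijective f (Finite.injective_iff_bijective.1 hfinj),
      fun o => if o ∈ C then 0 else τ₁ o + 1, ?_, ?_, ?_⟩
    · intro o ho
      rw [Equiv.ofBijective_apply, hf2 o (fun h => ho (hCS h))]
      exact hfix o (by simp [ho])
    · intro o ho
      rw [Equiv.ofBijective_apply]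
      by_cases hc : o ∈ C
      · rw [hf1 o hc]
        simp only [hc, hgC o hc, if_true, true_and]
        intro y hy _
        exact hgb o y hy
      · rw [hf2 o hc]
        simp only [hc, hσC o hc, if_false]
        have := hcert o (by simp [ho, hc])
        refine ⟨by rw [this.1], fun y hy hle => ?_⟩
        split_ifs at hle with hyc
        · omega
        · exact this.2 y (by simp [hy, hyc]) (by omega)
    · intro i z
      have hstep : z ∈ TTCaux P own (fuel + 1) S i ↔
          (z ∈ ((C.filter fun o => own o = i).image g) ∨ z ∈ TTCaux P own fuel (S \ C) i) := by
        rw [TTCaux]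
        simp only [hne, if_true, Finset.mem_union]
        rw [hC, hg]
      rw [hstep, hT]
      simp only [Finset.mem_image, Finset.mem_filter, Equiv.ofBijective_apply, Finset.mem_sdiff]
      constructor
      · rintro (⟨o, ⟨ho, hi⟩, hz⟩ | ⟨o, ⟨ho, hc⟩, hi, hz⟩)
        · exact ⟨o, hCS ho, hi, by rw [hf1 o ho, hz]⟩
        · exact ⟨o, ho, hi, by rw [hf2 o hc, hz]⟩
      · rintro ⟨o, ho, hi, hz⟩
        by_cases hc : o ∈ C
        · rw [hf1 o hc] at hz; exact Or.inl ⟨o, ⟨hc, hi⟩, hz⟩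
        · rw [hf2 o hc] at hz; exact Or.inr ⟨o, ⟨ho, hc⟩, hi, hz⟩

theorem owner_mem (ω : Allocation N O) (o : O) : o ∈ ω.bundle (ω.owner o) :=
  (ω.cover o).choose_spec

theorem alloc_unique (ω : Allocation N O) {o : O} {i j : N} (hi : o ∈ ω.bundle i)
    (hj : o ∈ ω.bundle j) : i = j := by
  by_contra h
  exact ω.disj i j h o hi hj

theorem owner_iff (ω : Allocation N O) (o : O) (i : N) : ω.owner o = i ↔ o ∈ ω.bundle i :=
  ⟨fun h => h ▸ owner_mem ω o, fun h => alloc_unique ω (owner_mem ω o) h⟩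

theorem TTC_cert [Fintype O] [Nonempty O] [DecidableEq O] (P : N → Pref O) (ω : Allocation N O) :
    ∃ (σ : Equiv.Perm O) (τ : O → ℕ), (∀ t, PC P ω.owner σ τ t) ∧
      ∀ i z, z ∈ TTC P ω i ↔ ∃ o, ω.owner o = i ∧ σ o = z := by
  obtain ⟨σ, τ, -, h, hT⟩ := ttc_cert P ω.owner (Fintype.card O + 1) Finset.univ
    (by rw [Finset.card_univ]; omega)
  refine ⟨σ, τ, fun t o _ => ⟨(h o (by simp)).1, fun y => (h o (by simp)).2 y (by simp)⟩, ?_⟩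
  intro i z
  rw [TTC, hT]; simp

/-- A certificate survives a drop of an object not received within the horizon. -/
theorem PC.drop [DecidableEq N] {P : N → Pref O} {own : O → N} {σ : Equiv.Perm O} {τ : O → ℕ}
    {t : ℕ} (h : PC P own σ τ t) {i : N} {x : O} {p' : Pref O}
    (hx : ∀ o, τ o < t → own o = i → σ o ≠ x)
    (h1 : ∀ u v : O, u ≠ x → v ≠ x → ((P i).strict {u} {v} ↔ p'.strict {u} {v}))
    (h2 : ∀ y : O, y ≠ x → p'.strict {y} {x}) :
    PC (Function.update P i p') own σ τ t := by
  intro o ho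
  refine ⟨(h o ho).1, fun y hy => ?_⟩
  have hw := (h o ho).2 y hy
  by_cases hi : own o = i
  · have hne := hx o ho hi
    rw [hi] at hw ⊢
    rw [Function.update_self]
    by_cases hyx : y = x
    · subst hyx; exact Or.inl (h2 _ hne)
    · rw [weak_single] at hw ⊢
      rcases hw with hw | hw
      · exact Or.inl ((h1 _ _ hne hyx).1 hw)
      · exact Or.inr hw
  · rw [Function.update_of_ne hi]; exact hw

theorem ttc_bal [Fintype O] [Nonempty O] [DecidableEq O] (P : N → Pref O) (ω : Allocation N O)
    (i : N) : (TTC P ω i).card = (ω.bundle i).card := by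
  obtain ⟨σ, τ, -, hT⟩ := TTC_cert P ω
  have : TTC P ω i = (ω.bundle i).map σ.toEmbedding := by
    ext z
    rw [hT]; simp only [Finset.mem_map, owner_iff]; simp
  rw [this, Finset.card_map]

theorem ttc_ige [Fintype O] [Nonempty O] [DecidableEq O] (P : N → Pref O)
    (hP : ∀ i, Lexicographic (P i)) (ω : Allocation N O) : IGEat P (TTC P ω) := by
  obtain ⟨σ, τ, hc, hT⟩ := TTC_cert P ω
  rintro ⟨k, obj, ag, hobj, hag, hmem, hgain⟩
  have key : ∀ ℓ, τ (obj (ℓ + 1)) < τ (obj ℓ) := by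
    intro ℓ
    have h1 := ((lex_swap (hP _) (hmem ℓ)).1 (hgain ℓ)).2
    obtain ⟨e, he, hσ⟩ := (hT _ _).1 (hmem ℓ)
    have h2 := hc (τ e + 1) e (by omega)
    by_contra hlt
    have h3 := h2.2 (obj (ℓ + 1)) (by rw [← h2.1, hσ]; omega)
    rw [he, hσ] at h3
    exact (not_weak.2 h1) h3
  obtain ⟨m, -, hm⟩ := Finset.exists_min_image Finset.univ (fun ℓ => τ (obj ℓ)) ⟨0, by simp⟩
  have := hm (m + 1) (by simp)
  have := key m
  omega

theorem ttc_welb [Fintype O] [Nonempty O] [DecidableEq O] (P : N → Pref O) (ω : Allocation N O)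
    (i : N) (o : O) (ho : o ∈ TTC P ω i) (w : O)
    (hmin : ∀ y ∈ ω.bundle i, (P i).weak {y} {w}) : (P i).weak {o} {w} := by
  obtain ⟨σ, τ, hc, hT⟩ := TTC_cert P ω
  obtain ⟨e, he, hσ⟩ := (hT _ _).1 ho
  have h1 := (hc (τ e + 1) e (by omega)).2 e le_rfl
  rw [he, hσ] at h1
  have h2 := hmin e ((owner_iff _ _ _).1 he)
  rcases h1 with h1 | h1
  · rcases h2 with h2 | h2
    · exact Or.inl ((P i).trans _ _ _ h1 h2)
    · rw [← h2]; exact Or.inl h1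
  · rw [h1]; exact h2

theorem ttc_dsp [Fintype O] [Nonempty O] [DecidableEq O] [DecidableEq N] (P : N → Pref O)
    (hP : ∀ i, Lexicographic (P i)) (ω : Allocation N O) (i : N) (p' : Pref O)
    (hd : DropStrategy (ω.bundle i) (P i) p') :
    (P i).weak (TTC P ω i) (TTC (Function.update P i p') ω i) := by
  obtain ⟨x, hx, h1, h2⟩ := hd
  obtain ⟨σ, τ, hc, hT⟩ := TTC_cert P ω
  obtain ⟨σ', τ', hc', hT'⟩ := TTC_cert (Function.update P i p') ω
  by_cases hxm : x ∈ TTC P ω i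
  · obtain ⟨e, he, hσ⟩ := (hT _ _).1 hxm
    have hec := hc (τ e + 1) e (by omega)
    have hpc : PC (Function.update P i p') ω.owner σ τ (τ e) := by
      apply (hc (τ e)).drop _ h1 h2
      intro o ho hoi hox
      have : o = e := σ.injective (by rw [hox, hσ])
      subst this; omega
    have hun := hpc.unique hc'
    have hx' : x ∉ TTC (Function.update P i p') ω i := by
      intro hx'
      obtain ⟨o, ho, hox⟩ := (hT' _ _).1 hx'
      have h3 := (hc' (τ' o + 1) o (by omega)).2 o le_rfl
      rw [ho, hox, Function.update_self] at h3
      have hne : o ≠ x := by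
        rintro rfl; exact hx ((owner_iff _ _ _).1 ho)
      exact (not_weak.2 (h2 o hne)) h3
    have hworse : ∀ y ∈ TTC (Function.update P i p') ω i, y ∉ TTC P ω i →
        (P i).weak {x} {y} := by
      intro y hy hyn
      by_contra hlt
      have hτy : τ y < τ e := by
        by_contra hle
        have := hec.2 y (by omega)
        rw [he, hσ] at this
        exact hlt this
      obtain ⟨z, hz, hzt⟩ := (hc (τ e)).symm y hτy
      have e1 := hun z (by omega)
      obtain ⟨u, hu, huy⟩ := (hT' _ _).1 hy
      have : z = u := σ'.injective (by rw [e1, hz, huy])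
      subst this
      exact hyn ((hT _ _).2 ⟨z, hu, hz⟩)
    left
    generalize TTC P ω i = A at *
    generalize TTC (Function.update P i p') ω i = B at *
    have hAB : A ≠ B := by rintro rfl; exact hx' hxm
    rw [hP i A B hAB]
    obtain ⟨d, hd, hdb⟩ := exists_best (P i) ((A \ B) ∪ (B \ A)) ⟨x, by simp [hxm, hx']⟩
    have hdA : d ∈ A \ B := by
      by_contra hdn
      have hd2 : d ∈ B \ A := by
        rcases Finset.mem_union.1 hd with h | h
        · exact absurd h hdn
        · exact h
      have hd3 := Finset.mem_sdiff.1 hd2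
      have h3 := hworse d hd3.1 hd3.2
      have h4 := hdb x (by simp [hxm, hx'])
      have := weak_antisymm h3 h4
      subst this
      exact hd3.2 hxm
    refine ⟨d, hdA, fun y hy hyd => ?_⟩
    rcases weak_single.1 (hdb y hy) with h | h
    · exact h
    · exact absurd h.symm hyd
  · right
    have hpc : ∀ t, PC (Function.update P i p') ω.owner σ τ t := by
      intro t
      apply (hc t).drop _ h1 h2
      intro o ho hoi hox
      exact hxm ((hT _ _).2 ⟨o, hoi, hox⟩)
    have : ∀ o, σ' o = σ o := fun o => (hpc (τ o + 1)).unique hc' o (by omega)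
    ext z
    rw [hT, hT']
    simp [this]

/-- Acceptable non-endowed objects. -/
noncomputable def acc [Fintype O] (ω : Allocation N O) (P : N → Pref O) (i : N) : Finset O :=
  Finset.univ.filter fun o => o ∉ ω.bundle i ∧ ∃ w ∈ ω.bundle i, (P i).strict {o} {w}

/-- Size of a profile. -/
noncomputable def size [Fintype N] [Fintype O] (ω : Allocation N O) (P : N → Pref O) : ℕ :=
  ∑ i, (acc ω P i).card

theorem mem_acc [Fintype O] (ω : Allocation N O) (P : N → Pref O) (i : N) (o : O) :
    o ∈ acc ω P i ↔ o ∉ ω.bundle i ∧ ∃ w ∈ ω.bundle i, (P i).strict {o} {w} := by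
  simp [acc]

theorem size_drop [Fintype N] [Fintype O] [DecidableEq N] (ω : Allocation N O) (P : N → Pref O)
    {i : N} {x : O} {p' : Pref O} (hx : x ∈ acc ω P i)
    (h1 : ∀ u v : O, u ≠ x → v ≠ x → ((P i).strict {u} {v} ↔ p'.strict {u} {v}))
    (h2 : ∀ y : O, y ≠ x → p'.strict {y} {x}) :
    size ω (Function.update P i p') < size ω P := by
  have hxω := ((mem_acc _ _ _ _).1 hx).1
  apply Finset.sum_lt_sum
  · intro j _
    by_cases hj : j = i
    · subst hj
      apply Finset.card_le_card
      intro o ho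
      rw [mem_acc, Function.update_self] at ho
      rw [mem_acc]
      obtain ⟨ho1, w, hw, hs⟩ := ho
      have hwx : w ≠ x := by rintro rfl; exact hxω hw
      have hox : o ≠ x := by rintro rfl; exact strict_asymm hs (h2 _ hwx)
      exact ⟨ho1, w, hw, (h1 _ _ hox hwx).2 hs⟩
    · apply le_of_eq; simp [acc, Function.update_of_ne hj]
  · refine ⟨i, Finset.mem_univ _, ?_⟩
    apply Finset.card_lt_card
    rw [Finset.ssubset_iff_of_subset]
    · refine ⟨x, hx, ?_⟩
      rw [mem_acc, Function.update_self]
      rintro ⟨-, w, hw, hs⟩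
      have hwx : w ≠ x := by rintro rfl; exact hxω hw
      exact strict_asymm hs (h2 _ hwx)
    · intro o ho
      rw [mem_acc, Function.update_self] at ho
      rw [mem_acc]
      obtain ⟨ho1, w, hw, hs⟩ := ho
      have hwx : w ≠ x := by rintro rfl; exact hxω hw
      have hox : o ≠ x := by rintro rfl; exact strict_asymm hs (h2 _ hwx)
      exact ⟨ho1, w, hw, (h1 _ _ hox hwx).2 hs⟩

theorem rule_unique [Fintype N] [Fintype O] [DecidableEq N] [DecidableEq O]
    (ω : Allocation N O) (φ : (N → Pref O) → Allocation N O)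
    (hB : RBAL Lexicographic ω φ) (hI : RIGE Lexicographic φ) (hW : RWELB Lexicographic ω φ)
    (hD : RDSP Lexicographic ω φ) :
    ∀ (t n : ℕ) (P : N → Pref O), (∀ i, Lexicographic (P i)) → size ω P = n →
      ∀ (σ : Equiv.Perm O) (τ : O → ℕ), PC P ω.owner σ τ t →
      ∀ o, τ o < t → σ o ∈ (φ P).bundle (ω.owner o) := by
  intro t
  induction t with
  | zero => intro n P _ _ σ τ _ o ho; omega
  | succ t iht =>
  intro n
  induction n using Nat.strong_induction_on with
  | _ n ihn =>
  intro P hP hsize σ τ hc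
  have hlow : ∀ o, τ o < t → σ o ∈ (φ P).bundle (ω.owner o) :=
    iht _ P hP rfl σ τ (hc.mono (by omega))
  -- objects below level t held by `i` come from `i`
  have hlow' : ∀ i z, z ∈ (φ P).bundle i → τ z < t →
      ∃ y, σ y = z ∧ τ y = τ z ∧ ω.owner y = i := by
    intro i z hz hzt
    obtain ⟨y, hy, hyt⟩ := hc.symm z (by omega)
    refine ⟨y, hy, hyt, ?_⟩
    have := hlow y (by omega)
    rw [hy] at this
    exact alloc_unique _ this hz
  have hsame : ∀ a b, τ a = t → τ b = t → ω.owner a = ω.owner b → a = b := by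
    intro a b ha hb hab
    have h1 := hc a (by omega)
    have h2 := hc b (by omega)
    have h3 := h1.2 (σ b) (by omega)
    have h4 := h2.2 (σ a) (by omega)
    rw [← hab] at h4
    exact σ.injective (weak_antisymm h3 h4)
  let bad : O → Prop := fun o => τ o = t ∧ σ o ∉ (φ P).bundle (ω.owner o)
  have hA : ∀ o, bad o → ∀ x ∈ acc ω P (ω.owner o),
      ∃ y, ω.owner y = ω.owner o ∧ τ y < t + 1 ∧ σ y = x := by
    rintro o ⟨ho, hob⟩ x hx
    by_contra hno
    push Not at hno
    obtain ⟨p', hp', h1, h2⟩ := exists_drop (P (ω.owner o)) x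
    have hc' := hc.drop (i := ω.owner o) (x := x) (p' := p')
      (fun y hy hyo => hno y hyo hy) h1 h2
    have hP' : ∀ j, Lexicographic (Function.update P (ω.owner o) p' j) := by
      intro j
      by_cases hj : j = ω.owner o
      · subst hj; rw [Function.update_self]; exact hp'
      · rw [Function.update_of_ne hj]; exact hP j
    have hlt := size_drop ω P hx h1 h2
    have hφ' := ihn _ (by omega) _ hP' rfl σ τ hc'
    have hdsp := hD P hP (ω.owner o) p' hp' ⟨x, ((mem_acc _ _ _ _).1 hx).1, h1, h2⟩
    have hb' := hφ' o (by omega)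
    have hne : (φ P).bundle (ω.owner o) ≠
        (φ (Function.update P (ω.owner o) p')).bundle (ω.owner o) := by
      intro h; rw [← h] at hb'; exact hob hb'
    rcases hdsp with hs | hs
    · rw [hP _ _ _ hne] at hs
      obtain ⟨z, hz, hzb⟩ := hs
      rw [Finset.mem_sdiff] at hz
      have hzs := hzb (σ o) (by simp [hob, hb']) (by rintro rfl; exact hz.2 hb')
      have hzt : τ z < t := by
        by_contra hle
        exact not_weak.2 hzs ((hc o (by omega)).2 z (by omega))
      obtain ⟨y, hy, hyt, hyo⟩ := hlow' _ z hz.1 hzt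
      have := hφ' y (by omega)
      rw [hy, hyo] at this
      exact hz.2 this
    · exact hne hs
  have hK : ∀ o, bad o → o ∈ (φ P).bundle (ω.owner o) := by
    intro o hbad
    have hacc := hA o hbad
    obtain ⟨ho, hob⟩ := hbad
    generalize hi : ω.owner o = i at *
    let R : Finset O := (ω.bundle i).image fun y => if τ y < t then σ y else y
    have hsub : (φ P).bundle i ⊆ R := by
      intro z hz
      simp only [R, Finset.mem_image]
      by_cases hzt : τ z < t
      · obtain ⟨y, hy, hyt, hyo⟩ := hlow' _ z hz hzt
        exact ⟨y, (owner_iff _ _ _).1 hyo, by rw [if_pos (by omega), hy]⟩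
      · by_cases hzω : z ∈ ω.bundle i
        · exact ⟨z, hzω, by rw [if_neg hzt]⟩
        · exfalso
          obtain ⟨w, hw, hwm⟩ := exists_worst (P i) _ (ω.nonempty i)
          have hzw := hW P hP i z hz w hw hwm
          rw [weak_single] at hzw
          rcases hzw with hzw | hzw
          · obtain ⟨y, hyi, hyt, hyz⟩ := hacc z ((mem_acc _ _ _ _).2 ⟨hzω, w, hw, hzw⟩)
            have h1 := (hc y hyt).1
            rw [hyz] at h1
            have : y = o := hsame y o (by omega) ho (by rw [hyi, hi])
            subst this
            rw [hyz] at hob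
            exact hob hz
          · subst hzw; exact hzω hw
    have hR : (φ P).bundle i = R := by
      apply Finset.eq_of_subset_of_card_le hsub
      rw [hB P hP i]
      exact Finset.card_image_le
    rw [hR]
    simp only [R, Finset.mem_image]
    exact ⟨o, (owner_iff _ _ _).1 hi, by rw [if_neg (by omega)]⟩
  have hback : ∀ y, bad (σ y) → bad y := by
    intro y hbad
    obtain ⟨u, hu, hut⟩ := hc.symm (σ y) (by rw [hbad.1]; omega)
    have : u = y := σ.injective hu
    subst this
    have hyt : τ u = t := by rw [hut, hbad.1]
    refine ⟨hyt, fun hmem => ?_⟩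
    have h1 := hK _ hbad
    have h2 := alloc_unique _ hmem h1
    have h3 := hsame _ _ hyt hbad.1 h2
    have h4 := hbad.2
    rw [← h3] at h4
    rw [← h3] at h4
    exact h4 (by rw [h2]; exact h3 ▸ h1)
  have hfwd : ∀ y, bad y → bad (σ y) := by
    intro y hy
    have := perm_closed σ.symm bad (fun z hz => hback _ (by simpa using hz)) (σ y) (by simpa using hy)
    exact this
  intro o₀ ho₀
  rcases Nat.lt_succ_iff_lt_or_eq.1 ho₀ with h | h
  · exact hlow _ h
  by_contra hcon
  have hbad₀ : bad o₀ := ⟨h, hcon⟩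
  obtain ⟨k, obj, hinj, horb, hnext⟩ := exists_cycle σ o₀
  have hbadn : ∀ n : ℕ, bad (σ^[n] o₀) := by
    intro n
    induction n with
    | zero => exact hbad₀
    | succ n ih => rw [Function.iterate_succ_apply']; exact hfwd _ ih
  have hbado : ∀ ℓ, bad (obj ℓ) := by
    intro ℓ
    obtain ⟨n, hn⟩ := horb ℓ
    rw [hn]; exact hbadn n
  refine hI P hP ⟨k, obj, fun ℓ => ω.owner (obj ℓ), hinj, ?_, fun ℓ => hK _ (hbado ℓ), ?_⟩
  · intro a b hab
    exact hinj (hsame _ _ (hbado a).1 (hbado b).1 hab)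
  · intro ℓ
    rw [lex_swap (hP _) (hK _ (hbado ℓ)), hnext]
    refine ⟨(hbado ℓ).2, ?_⟩
    have h1 := (hc (obj ℓ) (by rw [(hbado ℓ).1]; omega)).2 (obj ℓ) le_rfl
    rcases weak_single.1 h1 with h1 | h1
    · exact h1
    · exact absurd (h1.symm ▸ hK _ (hbado ℓ)) (hbado ℓ).2

/-- On the lexicographic domain, a rule satisfies BAL, IGE, WELB and DSP
iff it equals the generalized Top Trading Cycles rule. -/
theorem stmt3 {N O : Type} [Fintype N] [Fintype O] [DecidableEq N] [DecidableEq O] [Nonempty O]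
    (hN : 2 ≤ Fintype.card N) (hNO : Fintype.card N ≤ Fintype.card O)
    (ω : Allocation N O) (φ : (N → Pref O) → Allocation N O) :
    (RBAL Lexicographic ω φ ∧ RIGE Lexicographic φ ∧ RWELB Lexicographic ω φ ∧
        RDSP Lexicographic ω φ) ↔
      ∀ P : N → Pref O, (∀ i, Lexicographic (P i)) → ∀ i, (φ P).bundle i = TTC P ω i := by
  constructor
  · rintro ⟨hB, hI, hW, hD⟩ P hP i
    obtain ⟨σ, τ, hc, hT⟩ := TTC_cert P ω
    symm
    apply Finset.eq_of_subset_of_card_le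
    · intro z hz
      obtain ⟨o, ho, hz⟩ := (hT _ _).1 hz
      have := rule_unique ω φ hB hI hW hD (τ o + 1) _ P hP rfl σ τ (hc _) o (by omega)
      rwa [ho, hz] at this
    · rw [hB P hP i, ttc_bal]
  · intro h
    refine ⟨?_, ?_, ?_, ?_⟩
    · intro P hP i
      rw [h P hP i, ttc_bal]
    · intro P hP
      have : (φ P).bundle = TTC P ω := funext (h P hP)
      rw [this]
      exact ttc_ige P hP ω
    · intro P hP i o ho w hw hm
      rw [h P hP i] at ho
      exact ttc_welb P ω i o ho w hm
    · intro P hP i p' hp' hd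
      have hP' : ∀ j, Lexicographic (Function.update P i p' j) := by
        intro j
        by_cases hj : j = i
        · subst hj; rw [Function.update_self]; exact hp'
        · rw [Function.update_of_ne hj]; exact hP j
      rw [h P hP i, h _ hP' i]
      exact ttc_dsp P hP ω i p' hd

end Realloc
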